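/- Let k ≥ 2, q ≥ 1, let w = (k−1)^q (the word consisting of q copies of the digit k−1) with (k,w) ≠ (2,1), let s = s_{k,w}, and let n ≥ 2. Then for all N ≥ ⌈log_k(n)⌉ + 2, P_s^{(2)}(n,N) = n − 1. -/

import Mathlib

/-!
Write `q = Q + 1` and `d = k - 1`.  The sequence `s` counting occurrences of `d ^ q` satisfies
`s 0 = 0` and `s m = s (m / k) + [k ^ q ∣ m + 1]`; everything is derived from this recursion.

Let `L = ⌈log_k n⌉`, so that `n ≤ k ^ L`.  Call two prefixes equivalent (`PrefixEqv`) if their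
trailing runs of `d` agree up to length `Q`; then appending the same digits to both increases `s` by
the same amount (`block`).  Two consequences:

* prepending `d ^ q 0 ⋯ 0` shows that the set of factors is stable under adding `1` to every
  letter (`shift_up`);
* take a window `[i, i + n)` whose largest letter is `N ≥ L + 2`, and the smallest block
  `y k ^ M + [0, k ^ M)` containing it.  If `s y ≥ 1`, replacing `y` by an equivalent prefix with
  one occurrence less decreases all letters by `1`.  If `s y = 0`, then `M` is larger than `L + 1`,
  the window crosses a point `(a + 1) k ^ (M - 1)` at some offset `1 ≤ j ≤ n - 1`, and its letters
  coincide, up to adding `s (a + 1) ∈ {0, 1}` after the crossing, with those of a window crossing a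
  pure power of `k` at offset `j` (`classify`).

Let `V j` be the window crossing `k ^ (N + Q)` at offset `j`.  Its largest letter is `N`, and
its first zero is at index `j`; here `(k, q) ≠ (2, 1)` is needed for `s 1 = 0`.  So the factors with
largest letter `N` are the shifts of the factors with largest letter `N - 1`, together with the
`n - 1` distinct words `V 1, …, V (n - 1)`, which contain a zero and hence are not shifts.
-/


/-- Number of occurrences of `w` as a contiguous factor of `y`
(number of starting positions `0 ≤ i ≤ |y|-1` where `w` occurs). -/
def occ (w y : List ℕ) : ℕ :=
  ((List.range y.length).filter (fun i => w.isPrefixOf (y.drop i))).length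

/-- Base-`k` representation of `m`, most significant digit first, with `(0)_k = 0`. -/
def rep (k m : ℕ) : List ℕ := if m = 0 then [0] else (Nat.digits k m).reverse

/-- The `(k,w)`-digital sequence: number of occurrences of `w` in `(m)_k`. -/
def dseq (k : ℕ) (w : List ℕ) (m : ℕ) : ℕ := occ w (rep k m)

/-- The set of factors of length `n` of the sequence `a` all of whose letters are `≤ N`. -/
def factorSet (a : ℕ → ℕ) (n N : ℕ) : Set (List ℕ) :=
  { u | (∃ i, u = (List.range n).map fun j => a (i + j)) ∧ ∀ x ∈ u, x ≤ N }

/-- The `N`-factor complexity `P_a(n,N)`. -/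
noncomputable def Pc (a : ℕ → ℕ) (n N : ℕ) : ℕ := Nat.card (factorSet a n N)

/-- `F_a^{(1)}(n,N) = F_a(n,N) \ F_a(n,N-1)`. -/
def factorSet1 (a : ℕ → ℕ) (n N : ℕ) : Set (List ℕ) :=
  factorSet a n N \ factorSet a n (N - 1)

/-- First difference of the `N`-factor complexity in the variable `N`. -/
noncomputable def Pc1 (a : ℕ → ℕ) (n N : ℕ) : ℤ := (Pc a n N : ℤ) - (Pc a n (N - 1) : ℤ)

/-- Second difference of the `N`-factor complexity in the variable `N`. -/
noncomputable def Pc2 (a : ℕ → ℕ) (n N : ℕ) : ℤ := Pc1 a n N - Pc1 a n (N - 1)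

/-- The morphism `τ` on single letters: `τ(2i) = (2i)(2i+1)`, `τ(2i+1) = (2i+2)`. -/
def tauLetter (m : ℕ) : List ℕ := if m % 2 = 0 then [m, m + 1] else [m + 1]

/-- The morphism `τ` extended to finite words by concatenation. -/
def tauWord (u : List ℕ) : List ℕ := u.flatMap tauLetter

/-- Fibonacci numbers with `F_0 = F_1 = 1`. -/
def fibW : ℕ → ℕ
  | 0 => 1
  | 1 => 1
  | n + 2 => fibW (n + 1) + fibW n

/-- `φ(n) = max {k : F_k < n}`. -/
noncomputable def phi (n : ℕ) : ℕ := sSup {k | fibW k < n}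

/-- The infinite Fibonacci sequence `f = τ^∞(0)`: since `τ^{p}(0)` is a prefix of
`τ^{p+1}(0)` and `|τ^{n+1}(0)| = F_{n+2} > n`, the `n`-th letter of the fixed point is
the `n`-th letter of `τ^{n+1}(0)`. -/
def fibSeq (n : ℕ) : ℕ := (tauWord^[n + 1] [0]).getD n 0

/-- The set of factors of length `n` of a finite word `u` all of whose letters are `≤ N`. -/
def factorSetW (u : List ℕ) (n N : ℕ) : Set (List ℕ) :=
  { v | v.length = n ∧ v <:+: u ∧ ∀ x ∈ v, x ≤ N }

/-! ### The recursion for the digital sequence -/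

lemma occ_nil (w : List ℕ) : occ w [] = 0 := by simp [occ]

lemma occ_cons (w : List ℕ) (a : ℕ) (y : List ℕ) :
    occ w (a :: y) = (if w <+: a :: y then 1 else 0) + occ w y := by
  unfold occ
  rw [List.length_cons, List.range_succ_eq_map, List.filter_cons, List.filter_map]
  simp only [List.drop_zero, List.isPrefixOf_iff_prefix, Function.comp_def, List.drop_succ_cons,
    Nat.succ_eq_add_one]
  split_ifs <;> simp; omega

lemma occ_append_singleton (w : List ℕ) (hw : w ≠ []) (y : List ℕ) (c : ℕ) :
    occ w (y ++ [c]) = occ w y + (if w <:+ y ++ [c] then 1 else 0) := by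
  induction y with
  | nil =>
    have h : w <+: [c] ↔ w <:+ [c] := by
      rw [List.prefix_cons_iff, List.suffix_cons_iff]
      simp [hw]
    simp [occ_cons, occ_nil, h]
  | cons a y ih =>
    rw [List.cons_append, occ_cons, occ_cons, ih]
    -- A word of full length `|y| + 2` is a prefix iff it is a suffix; a shorter one does not see
    -- the extra letter at the opposite end.
    by_cases hl : w.length ≤ y.length + 1
    · have h1 : w <+: a :: (y ++ [c]) ↔ w <+: a :: y := by
        constructor
        · intro h
          exact List.prefix_of_prefix_length_le h ⟨[c], by simp⟩ (by simpa using hl)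
        · intro h
          exact h.trans ⟨[c], by simp⟩
      have h2 : w <:+ a :: (y ++ [c]) ↔ w <:+ y ++ [c] := by
        constructor
        · intro h
          exact List.suffix_of_suffix_length_le h ⟨[a], by simp⟩ (by simpa using hl)
        · intro h
          exact h.trans ⟨[a], by simp⟩
      simp only [h1, h2]
      omega
    · have h1 : ¬ w <+: a :: y := fun h => hl (by simpa using h.length_le)
      have h2 : ¬ w <:+ y ++ [c] := fun h => hl (by simpa using h.length_le)
      have h3 : w <+: a :: (y ++ [c]) ↔ w <:+ a :: (y ++ [c]) := by
        constructor
        · intro h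
          rw [h.eq_of_length_le (by simp; omega)]
        · intro h
          rw [h.eq_of_length_le (by simp; omega)]
      simp only [h1, h2, h3, if_false]
      omega

/-- `m * k + c` ends with `i + 1` digits `k - 1` iff `c = k - 1` and `m` ends with `i` of them. -/
lemma pow_succ_dvd_iff {k : ℕ} (hk : 2 ≤ k) {c : ℕ} (hc : c < k) (i m : ℕ) :
    k ^ (i + 1) ∣ m * k + c + 1 ↔ c + 1 = k ∧ k ^ i ∣ m + 1 := by
  constructor
  · intro h
    have h1 : k ∣ m * k + c + 1 := (dvd_pow_self k (by omega)).trans h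
    have h2 : k ∣ c + 1 := by
      rw [add_assoc] at h1
      exact (Nat.dvd_add_right (Dvd.intro_left m rfl)).1 h1
    have h3 : c + 1 = k := le_antisymm hc (Nat.le_of_dvd (by omega) h2)
    refine ⟨h3, ?_⟩
    have h4 : m * k + c + 1 = (m + 1) * k := by rw [add_assoc, h3]; ring
    rw [h4, pow_succ] at h
    exact Nat.dvd_of_mul_dvd_mul_right (by omega) h
  · rintro ⟨h3, h⟩
    have h4 : m * k + c + 1 = (m + 1) * k := by rw [add_assoc, h3]; ring
    rw [h4, pow_succ]
    exact Nat.mul_dvd_mul_right h k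

lemma replicate_prefix_digits {k : ℕ} (hk : 2 ≤ k) (q m : ℕ) :
    List.replicate q (k - 1) <+: Nat.digits k m ↔ k ^ q ∣ m + 1 := by
  induction q generalizing m with
  | zero => simp
  | succ q ih =>
    rcases Nat.eq_zero_or_pos m with rfl | hm
    · have : ¬ k ^ (q + 1) ∣ 1 := by
        rw [Nat.dvd_one]
        exact (Nat.one_lt_pow (by omega) (by omega)).ne'
      simp [List.replicate_succ, this]
    · rw [Nat.digits_def' (by omega) hm, List.replicate_succ, List.cons_prefix_cons, ih]
      have := pow_succ_dvd_iff hk (Nat.mod_lt m (show k > 0 by omega)) q (m / k)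
      rw [Nat.div_add_mod'] at this
      rw [this]
      have : k - 1 = m % k ↔ m % k + 1 = k := by omega
      rw [this]

lemma dseq_eq_occ_digits {k q : ℕ} (hk : 2 ≤ k) (m : ℕ) :
    dseq k (List.replicate (q + 1) (k - 1)) m
      = occ (List.replicate (q + 1) (k - 1)) (Nat.digits k m).reverse := by
  unfold dseq rep
  split_ifs with h
  · subst h
    simp [occ_cons, List.replicate_succ]
    omega
  · rfl

lemma dseq_zero {k q : ℕ} (hk : 2 ≤ k) :
    dseq k (List.replicate (q + 1) (k - 1)) 0 = 0 := by
  rw [dseq_eq_occ_digits hk]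
  simp [occ_nil]

lemma dseq_rec {k q : ℕ} (hk : 2 ≤ k) (m : ℕ) :
    dseq k (List.replicate (q + 1) (k - 1)) m
      = dseq k (List.replicate (q + 1) (k - 1)) (m / k)
        + if k ^ (q + 1) ∣ m + 1 then 1 else 0 := by
  rcases Nat.eq_zero_or_pos m with rfl | hm
  · simp [dseq_zero hk]
    omega
  · rw [dseq_eq_occ_digits hk, dseq_eq_occ_digits hk]
    have hd : (Nat.digits k m).reverse = (Nat.digits k (m / k)).reverse ++ [m % k] := by
      rw [Nat.digits_def' (by omega) hm, List.reverse_cons]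
    have h := replicate_prefix_digits hk (q + 1) m
    rw [← List.reverse_suffix, List.reverse_replicate] at h
    simp only [← h]
    rw [hd, occ_append_singleton _ (by simp [List.replicate_succ])]

/-! ### Block structure of a sequence satisfying the recursion -/

/-- The recursion characterising the number of occurrences of `(k - 1) ^ (Q + 1)`. -/
structure DigitRec (k Q : ℕ) (s : ℕ → ℕ) : Prop where
  two_le : 2 ≤ k
  zero : s 0 = 0
  rec_div : ∀ m, s m = s (m / k) + if k ^ (Q + 1) ∣ m + 1 then 1 else 0

/-- The trailing runs of the digit `k - 1` in `m` and `m'` have the same length, or both have length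
at least `Q`. -/
def PrefixEqv (k Q m m' : ℕ) : Prop := ∀ i ≤ Q, (k ^ i ∣ m + 1 ↔ k ^ i ∣ m' + 1)

lemma PrefixEqv.of_dvd {k Q m m' : ℕ} (h : k ^ Q ∣ m + 1) (h' : k ^ Q ∣ m' + 1) :
    PrefixEqv k Q m m' := fun _ hi =>
  ⟨fun _ => (pow_dvd_pow k hi).trans h', fun _ => (pow_dvd_pow k hi).trans h⟩

lemma PrefixEqv.of_not_dvd {k Q m m' : ℕ} (h : ¬ k ∣ m + 1) (h' : ¬ k ∣ m' + 1) :
    PrefixEqv k Q m m' := by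
  intro i _
  rcases i with _ | i
  · simp
  · exact ⟨fun H => absurd ((dvd_pow_self k (by omega)).trans H) h,
      fun H => absurd ((dvd_pow_self k (by omega)).trans H) h'⟩

lemma PrefixEqv.step {k Q m m' : ℕ} (hk : 2 ≤ k) (h : PrefixEqv k Q m m') {c : ℕ} (hc : c < k) :
    PrefixEqv k Q (m * k + c) (m' * k + c) := by
  intro i hi
  rcases i with _ | i
  · simp
  · rw [pow_succ_dvd_iff hk hc, pow_succ_dvd_iff hk hc, h i (by omega)]

namespace DigitRec

variable {k Q : ℕ} {s : ℕ → ℕ}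

lemma not_dvd_one (hs : DigitRec k Q s) : ¬ k ∣ 0 + 1 := by
  have := hs.two_le
  rw [zero_add, Nat.dvd_one]
  omega

lemma not_dvd_mul (hs : DigitRec k Q s) (x : ℕ) : ¬ k ∣ x * k + 1 := by
  have := hs.two_le
  rw [Nat.dvd_add_right (Dvd.intro_left x rfl), Nat.dvd_one]
  omega

lemma pow_pos (hs : DigitRec k Q s) (t : ℕ) : 0 < k ^ t :=
  Nat.pow_pos (by have := hs.two_le; omega)

lemma step (hs : DigitRec k Q s) (m : ℕ) {c : ℕ} (hc : c < k) :
    s (m * k + c) = s m + if c + 1 = k ∧ k ^ Q ∣ m + 1 then 1 else 0 := by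
  rw [hs.rec_div]
  have h : (m * k + c) / k = m := by
    rw [mul_comm, Nat.mul_add_div (by omega), Nat.div_eq_of_lt hc, add_zero]
  simp only [h, pow_succ_dvd_iff hs.two_le hc]

lemma of_not_dvd (hs : DigitRec k Q s) {m : ℕ} (h : ¬ k ∣ m + 1) : s m = s (m / k) := by
  rw [hs.rec_div, if_neg, add_zero]
  exact fun H => h ((dvd_pow_self k (by omega)).trans H)

lemma split (_hs : DigitRec k Q s) (m L r : ℕ) :
    m * k ^ (L + 1) + r = (m * k ^ L + r / k) * k + r % k := by
  have := Nat.div_add_mod' r k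
  rw [add_mul, add_assoc, this, pow_succ, mul_assoc]

lemma bounds (hs : DigitRec k Q s) (m L r : ℕ) (hr : r < k ^ L) :
    s m ≤ s (m * k ^ L + r) ∧ s (m * k ^ L + r) ≤ s m + L := by
  induction L generalizing r with
  | zero => simp at hr; simp [hr]
  | succ L ih =>
    have := hs.two_le
    have h1 : r / k < k ^ L := by
      rw [Nat.div_lt_iff_lt_mul (by omega), ← pow_succ]; exact hr
    rw [hs.split, hs.step _ (Nat.mod_lt r (by omega))]
    have := ih _ h1
    split_ifs <;> omega

/-- Equivalent prefixes followed by the same digits gain the same number of occurrences. -/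
lemma block (hs : DigitRec k Q s) {m m' : ℕ} (h : PrefixEqv k Q m m') (L r : ℕ) (hr : r < k ^ L) :
    s (m * k ^ L + r) + s m' = s (m' * k ^ L + r) + s m := by
  suffices H : PrefixEqv k Q (m * k ^ L + r) (m' * k ^ L + r) ∧
      s (m * k ^ L + r) + s m' = s (m' * k ^ L + r) + s m from H.2
  induction L generalizing r with
  | zero => simp at hr; simp [hr, h, add_comm]
  | succ L ih =>
    have := hs.two_le
    have h1 : r / k < k ^ L := by
      rw [Nat.div_lt_iff_lt_mul (by omega), ← pow_succ]; exact hr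
    have h2 := Nat.mod_lt r (show k > 0 by omega)
    obtain ⟨e, E⟩ := ih _ h1
    rw [hs.split, hs.split]
    refine ⟨e.step hs.two_le h2, ?_⟩
    rw [hs.step _ h2, hs.step _ h2]
    simp only [e Q le_rfl]
    omega

lemma block_of_not_dvd (hs : DigitRec k Q s) {m : ℕ} (h : ¬ k ∣ m + 1) (L r : ℕ)
    (hr : r < k ^ L) : s (m * k ^ L + r) = s m + s r := by
  have := hs.block (PrefixEqv.of_not_dvd (Q := Q) h hs.not_dvd_one) L r hr
  rw [zero_mul, zero_add, hs.zero] at this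
  omega

lemma mul_pow (hs : DigitRec k Q s) (b t : ℕ) : s (b * k ^ t) = s b := by
  have hk := hs.two_le
  induction t with
  | zero => simp
  | succ t ih =>
    have := hs.step (b * k ^ t) (c := 0) (by omega)
    rw [add_zero, if_neg (by omega), add_zero, ih, mul_assoc, ← pow_succ] at this
    exact this

/-- The value at `x` followed by exactly `t` digits `k - 1`, where `x` does not end with `k - 1`;
the truncated subtraction accounts for runs shorter than `Q + 1`. -/
lemma run (hs : DigitRec k Q s) {x : ℕ} (h : ¬ k ∣ x + 1) (t m : ℕ)
    (hm : m + 1 = (x + 1) * k ^ t) : s m = s x + (t - Q) := by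
  have hk := hs.two_le
  induction t generalizing m with
  | zero =>
    obtain rfl : m = x := by simpa using hm
    simp
  | succ t ih =>
    have hpos : 0 < (x + 1) * k ^ t := Nat.mul_pos (by omega) (hs.pow_pos t)
    obtain ⟨m', hm'⟩ : ∃ m', m' + 1 = (x + 1) * k ^ t := ⟨(x + 1) * k ^ t - 1, by omega⟩
    have e : m = m' * k + (k - 1) := by
      have : m + 1 = m' * k + k := by rw [hm, pow_succ, ← mul_assoc, ← hm']; ring
      omega
    rw [e, hs.step _ (by omega), ih m' hm', hm']
    have hdvd : k ^ Q ∣ (x + 1) * k ^ t ↔ Q ≤ t := by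
      constructor
      · intro H
        by_contra hlt
        rw [show Q = (Q - t - 1) + 1 + t by omega, pow_add] at H
        have := Nat.dvd_of_mul_dvd_mul_right (hs.pow_pos t) H
        exact h ((dvd_pow_self k (by omega)).trans this)
      · intro H
        exact (pow_dvd_pow k H).trans (Dvd.intro_left _ rfl)
    simp only [hdvd]
    split_ifs <;> omega

/-- Every equivalence class of prefixes contains representatives with any number of occurrences. -/
lemma exists_eqv (hs : DigitRec k Q s) (p v : ℕ) : ∃ p', PrefixEqv k Q p' p ∧ s p' = v := by
  have hk := hs.two_le
  classical
  -- `j` is the length of the trailing run of `p`, capped at `Q`; the representative is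
  -- `(k - 1) ^ (Q + v) 0 (k - 1) ^ j`.
  set j := Nat.findGreatest (fun i => k ^ i ∣ p + 1) Q with hj
  have hjQ : j ≤ Q := Nat.findGreatest_le _
  have hjd : k ^ j ∣ p + 1 :=
    Nat.findGreatest_spec (P := fun i => k ^ i ∣ p + 1) (Nat.zero_le Q) (by simp)
  obtain ⟨X, hX⟩ : ∃ X, X + 1 = k ^ (Q + v) :=
    ⟨k ^ (Q + v) - 1, by have := hs.pow_pos (Q + v); omega⟩
  obtain ⟨p', hp'⟩ : ∃ p', p' + 1 = (X * k + 1) * k ^ j :=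
    ⟨(X * k + 1) * k ^ j - 1, by
      have : 0 < (X * k + 1) * k ^ j := Nat.mul_pos (by omega) (hs.pow_pos j)
      omega⟩
  have hXs : s X = v := by
    rw [hs.run hs.not_dvd_one (Q + v) X (by simpa using hX), hs.zero]
    omega
  refine ⟨p', ?_, ?_⟩
  · intro i hi
    have h1 : k ^ i ∣ p + 1 ↔ i ≤ j := by
      constructor
      · intro H
        exact Nat.le_findGreatest hi H
      · intro H
        exact (pow_dvd_pow k H).trans hjd
    rw [h1, hp']
    constructor
    · intro H
      by_contra hlt
      rw [show i = (i - j - 1) + 1 + j by omega, pow_add] at H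
      have := Nat.dvd_of_mul_dvd_mul_right (hs.pow_pos j) H
      exact hs.not_dvd_mul X ((dvd_pow_self k (by omega)).trans this)
    · intro H
      exact (pow_dvd_pow k H).trans (Dvd.intro_left _ rfl)
  · rw [hs.run (hs.not_dvd_mul X) j p' hp']
    have := hs.mul_pow X 1
    rw [pow_one] at this
    omega

/-! ### Windows crossing a multiple of a large power of `k` -/

/-- The gain of an `L`-digit block at distance `e` from its end, after a prefix ending with at least
`Q` digits `k - 1`. -/
def gain (k Q : ℕ) (s : ℕ → ℕ) (L e : ℕ) : ℕ := s (k ^ Q * k ^ L - e)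

lemma sub_eq_block {B K e : ℕ} (hB : 0 < B) (heK : e ≤ K) :
    B * K - e = (B - 1) * K + (K - e) := by
  obtain ⟨B, rfl⟩ : ∃ B', B = B' + 1 := ⟨B - 1, by omega⟩
  rw [Nat.add_sub_cancel, add_mul, one_mul]
  omega

lemma below (hs : DigitRec k Q s) {a : ℕ} (ha : ¬ k ∣ a + 1) {t : ℕ} (ht : Q ≤ t) (L e : ℕ)
    (he : 1 ≤ e) (heL : e ≤ k ^ L) :
    s ((a + 1) * k ^ (t + L) - e) = s a + (t - Q) + gain k Q s L e := by
  have hp1 : 0 < (a + 1) * k ^ t := Nat.mul_pos (by omega) (hs.pow_pos t)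
  have hp2 := hs.pow_pos Q
  have e1 : (a + 1) * k ^ t - 1 + 1 = (a + 1) * k ^ t := by omega
  have e2 : k ^ Q - 1 + 1 = k ^ Q := by omega
  rw [gain, pow_add, ← mul_assoc, sub_eq_block hp1 heL, sub_eq_block hp2 heL]
  have hd : k ^ Q ∣ (a + 1) * k ^ t - 1 + 1 := by
    rw [e1]
    exact (pow_dvd_pow k ht).trans (Dvd.intro_left _ rfl)
  have H := hs.block (PrefixEqv.of_dvd hd (m' := k ^ Q - 1) (by rw [e2])) L (k ^ L - e) (by omega)
  rw [hs.run ha t _ e1, hs.run hs.not_dvd_one Q (k ^ Q - 1) (by simpa using e2), hs.zero] at H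
  omega

lemma gain_le (hs : DigitRec k Q s) (L e : ℕ) (he : 1 ≤ e) (heL : e ≤ k ^ L) :
    gain k Q s L e ≤ L := by
  have hp2 := hs.pow_pos Q
  rw [gain, sub_eq_block hp2 heL]
  have := (hs.bounds (k ^ Q - 1) L (k ^ L - e) (by omega)).2
  rw [hs.run hs.not_dvd_one Q (k ^ Q - 1) (by rw [zero_add, one_mul]; omega), hs.zero] at this
  omega

lemma gain_one (hs : DigitRec k Q s) (L : ℕ) : gain k Q s L 1 = L := by
  have := hs.pow_pos (Q + L)
  rw [gain, ← pow_add,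
    hs.run hs.not_dvd_one (Q + L) _ (by rw [zero_add, one_mul]; omega), hs.zero]
  omega

lemma above (hs : DigitRec k Q s) (b : ℕ) {t : ℕ} (ht : 1 ≤ t) (L r : ℕ) (hr : r < k ^ L) :
    s (b * k ^ (t + L) + r) = s b + s r := by
  obtain ⟨t, rfl⟩ : ∃ t', t = t' + 1 := ⟨t - 1, by omega⟩
  rw [pow_add, ← mul_assoc, hs.block_of_not_dvd _ L r hr, hs.mul_pow]
  rw [pow_succ, ← mul_assoc]
  exact hs.not_dvd_mul _

lemma le_of_lt_pow (hs : DigitRec k Q s) {L r : ℕ} (hr : r < k ^ L) : s r ≤ L := by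
  have := (hs.bounds 0 L r hr).2
  rw [zero_mul, zero_add, hs.zero] at this
  omega

lemma shift_up (hs : DigitRec k Q s) (n i : ℕ) :
    ∃ i', ∀ x < n, s (i' + x) = s (i + x) + 1 := by
  obtain ⟨p, hp, hp1⟩ := hs.exists_eqv 0 1
  refine ⟨p * k ^ (i + n) + i, fun x hx => ?_⟩
  have hlt : i + x < k ^ (i + n) := lt_trans (by omega) (Nat.lt_pow_self hs.two_le)
  have := hs.block hp (i + n) (i + x) hlt
  rw [zero_mul, zero_add, hs.zero] at this
  rw [add_assoc]
  omega

section Window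

variable {n L N : ℕ}

/-- Letters before the crossing in the window starting at `k ^ (N + Q) - j`. -/
lemma window_left (hs : DigitRec k Q s) (hn : n ≤ k ^ L) (hL : L ≤ N) {j x : ℕ} (hj : j < n)
    (hx : x < j) : s (k ^ (N + Q) - j + x) = N - L + gain k Q s L (j - x) := by
  have h1 : k ^ L ≤ k ^ (N + Q) := Nat.pow_le_pow_right (by have := hs.two_le; omega) (by omega)
  have := hs.below hs.not_dvd_one (t := N - L + Q) (by omega) L (j - x) (by omega) (by omega)
  rw [show N - L + Q + L = N + Q by omega, zero_add, one_mul, hs.zero,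
    show k ^ (N + Q) - (j - x) = k ^ (N + Q) - j + x by omega] at this
  omega

/-- Letters after the crossing in the window starting at `k ^ (N + Q) - j`. -/
lemma window_right (hs : DigitRec k Q s) (h1 : s 1 = 0) (hn : n ≤ k ^ L) (hL : L + 1 ≤ N)
    {j x : ℕ} (hj : j < n) (hjx : j ≤ x) (hx : x < n) :
    s (k ^ (N + Q) - j + x) = s (x - j) := by
  have h2 : k ^ L ≤ k ^ (N + Q) := Nat.pow_le_pow_right (by have := hs.two_le; omega) (by omega)
  have := hs.above 1 (t := N - L + Q) (by omega) L (x - j) (by omega)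
  rw [show N - L + Q + L = N + Q by omega, one_mul, h1,
    show k ^ (N + Q) + (x - j) = k ^ (N + Q) - j + x by omega] at this
  omega

/-- A window with largest letter `N` is either a shift of another window, or agrees with the
window crossing `k ^ (N + Q)` at some offset `1 ≤ j ≤ n - 1`. -/
lemma classify (hs : DigitRec k Q s) (h1 : s 1 = 0) (hn2 : 2 ≤ n) (hn : n ≤ k ^ L)
    (hL : L + 2 ≤ N) (i : ℕ) (hle : ∀ x < n, s (i + x) ≤ N) (hmax : ∃ x < n, s (i + x) = N) :
    (∃ i', ∀ x < n, s (i + x) = s (i' + x) + 1) ∨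
    ∃ j, 1 ≤ j ∧ j < n ∧ ∀ x < n, s (i + x) = s (k ^ (N + Q) - j + x) := by
  have hk := hs.two_le
  have hex : ∃ M, i / k ^ M = (i + (n - 1)) / k ^ M := by
    refine ⟨i + n, ?_⟩
    have : i + n < k ^ (i + n) := Nat.lt_pow_self hk
    rw [Nat.div_eq_of_lt (by omega), Nat.div_eq_of_lt (by omega)]
  classical
  obtain ⟨M, hM, hMmin⟩ : ∃ M, i / k ^ M = (i + (n - 1)) / k ^ M ∧
      ∀ M' < M, i / k ^ M' ≠ (i + (n - 1)) / k ^ M' :=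
    ⟨Nat.find hex, Nat.find_spec hex, fun M' h => Nat.find_min hex h⟩
  set y := i / k ^ M with hy
  have hMp := hs.pow_pos M
  set r := i % k ^ M with hr
  have hi : i = y * k ^ M + r := (Nat.div_add_mod' i (k ^ M)).symm
  have hrn : r + (n - 1) < k ^ M := by
    have h := Nat.lt_div_mul_add hMp (a := i + (n - 1))
    rw [← hM] at h
    omega
  by_cases hsy : 1 ≤ s y
  · left
    obtain ⟨y', hy', hsy'⟩ := hs.exists_eqv y (s y - 1)
    refine ⟨y' * k ^ M + r, fun x hx => ?_⟩
    have := hs.block hy' M (r + x) (by omega)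
    rw [hi, add_assoc, add_assoc]
    omega
  have hsy0 : s y = 0 := by omega
  obtain ⟨x0, hx0, hx0N⟩ := hmax
  have hMbig : L + 2 ≤ M := by
    by_contra hlt
    have := (hs.bounds y M (r + x0) (by omega)).2
    rw [← add_assoc, ← hi] at this
    omega
  obtain ⟨t, rfl⟩ : ∃ t, M = t + L + 1 := ⟨M - L - 1, by omega⟩
  have ht1 : 1 ≤ t := by omega
  have hmin := hMmin (t + L) (by omega)
  set a := i / k ^ (t + L) with ha
  have hKp := hs.pow_pos (t + L)
  have hnK : n ≤ k ^ (t + L) := hn.trans (Nat.pow_le_pow_right (by omega) (by omega))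
  -- The window is shorter than `k ^ (t + L)`, so it meets exactly the blocks `a` and `a + 1`.
  have hlow : a * k ^ (t + L) ≤ i := Nat.div_mul_le_self _ _
  have hup : i < a * k ^ (t + L) + k ^ (t + L) := Nat.lt_div_mul_add hKp
  have hb : (i + (n - 1)) / k ^ (t + L) = a + 1 := by
    have h1 : a ≤ (i + (n - 1)) / k ^ (t + L) := Nat.div_le_div_right (by omega)
    have h2 : (i + (n - 1)) / k ^ (t + L) < a + 2 := by
      rw [Nat.div_lt_iff_lt_mul hKp, add_mul]
      omega
    omega
  have hcross : (a + 1) * k ^ (t + L) ≤ i + (n - 1) := by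
    rw [← hb]; exact Nat.div_mul_le_self _ _
  have hya : a / k = y := by rw [ha, hy, Nat.div_div_eq_div_mul, pow_succ]
  have hyb : (a + 1) / k = y := by rw [← hb, hM, Nat.div_div_eq_div_mul, pow_succ]
  have hand : ¬ k ∣ a + 1 := by
    intro h
    have := Nat.succ_div (a := a) (b := k)
    rw [if_pos h] at this
    omega
  have hsa : s a = 0 := by rw [hs.of_not_dvd hand, hya, hsy0]
  have hsb : s (a + 1) ≤ 1 := by
    rw [hs.rec_div, hyb, hsy0]
    split_ifs <;> omega
  have hBexp : (a + 1) * k ^ (t + L) = a * k ^ (t + L) + k ^ (t + L) := by ring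
  obtain ⟨j, hj⟩ : ∃ j, i + j = (a + 1) * k ^ (t + L) := ⟨(a + 1) * k ^ (t + L) - i, by omega⟩
  have hj1 : 1 ≤ j := by omega
  have hjn : j < n := by omega
  have hright : ∀ x, j ≤ x → x < n → s (i + x) = s (a + 1) + s (x - j) := by
    intro x hjx hx
    have := hs.above (a + 1) ht1 L (x - j) (by omega)
    rwa [← hj, show i + j + (x - j) = i + x by omega] at this
  -- After the crossing the letters are at most `L + 1 < N`, so the maximum lies before it.
  have hx0j : x0 < j := by
    by_contra h
    have := hright x0 (by omega) hx0
    have := hs.le_of_lt_pow (show x0 - j < k ^ L by omega)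
    omega
  have htQ : Q < t := by
    -- The prefix `p = (a + 1) * k ^ t - 1` has value `t - Q`, and a block adds at most `L`.
    have hp1 : 0 < (a + 1) * k ^ t := Nat.mul_pos (Nat.succ_pos a) (hs.pow_pos t)
    have hrun := hs.run hand t ((a + 1) * k ^ t - 1) (Nat.sub_add_cancel hp1)
    have hbd := (hs.bounds ((a + 1) * k ^ t - 1) L (k ^ L - (j - x0))
      (by have := hs.pow_pos L; omega)).2
    rw [← sub_eq_block (K := k ^ L) (e := j - x0) hp1 (by omega), mul_assoc, ← pow_add, ← hj,
      show i + j - (j - x0) = i + x0 by omega] at hbd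
    omega
  have hleft : ∀ x < j, s (i + x) = (t - Q) + gain k Q s L (j - x) := by
    intro x hx
    have := hs.below hand htQ.le L (j - x) (by omega) (by omega)
    rw [← hj, show i + j - (j - x) = i + x by omega] at this
    omega
  -- The letter just before the crossing realises the maximal gain `L`, which pins down `t`.
  have htN : t + L = N + Q := by
    have e1 := hleft x0 hx0j
    have e2 := hs.gain_le L (j - x0) (by omega) (by omega)
    have e3 := hleft (j - 1) (by omega)
    rw [show j - (j - 1) = 1 by omega, hs.gain_one] at e3
    have e4 := hle (j - 1) (by omega)
    omega
  rcases Nat.eq_zero_or_pos (s (a + 1)) with hb0 | hbpos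
  · right
    refine ⟨j, hj1, hjn, fun x hx => ?_⟩
    by_cases hxj : x < j
    · rw [hleft x hxj, hs.window_left hn (by omega) hjn hxj]
      omega
    · rw [hright x (by omega) hx, hs.window_right h1 hn (by omega) hjn (by omega) hx]
      omega
  · left
    refine ⟨k ^ (N - 1 + Q) - j, fun x hx => ?_⟩
    by_cases hxj : x < j
    · rw [hleft x hxj, hs.window_left hn (by omega) hjn hxj]
      omega
    · rw [hright x (by omega) hx, hs.window_right h1 hn (by omega) hjn (by omega) hx]
      omega

end Window

end DigitRec

/-! ### Counting factors -/

/-- The factor of length `n` of `a` starting at position `i`. -/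
def window (a : ℕ → ℕ) (n i : ℕ) : List ℕ := (List.range n).map fun j => a (i + j)

lemma window_inj {a b : ℕ → ℕ} {n i i' : ℕ} :
    window a n i = window b n i' ↔ ∀ x < n, a (i + x) = b (i' + x) := by
  simp [window]

lemma map_succ_window (a : ℕ → ℕ) (n i : ℕ) :
    (window a n i).map (· + 1) = window (fun m => a m + 1) n i := by
  simp [window]

lemma mem_factorSet {a : ℕ → ℕ} {n N : ℕ} {u : List ℕ} :
    u ∈ factorSet a n N ↔ ∃ i, u = window a n i ∧ ∀ x < n, a (i + x) ≤ N := by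
  constructor
  · rintro ⟨⟨i, rfl⟩, h⟩
    exact ⟨i, rfl, by simpa using h⟩
  · rintro ⟨i, rfl, h⟩
    exact ⟨⟨i, rfl⟩, by simpa [window] using h⟩

lemma mem_factorSet1 {a : ℕ → ℕ} {n N : ℕ} (hN : 1 ≤ N) {u : List ℕ} :
    u ∈ factorSet1 a n N ↔
      ∃ i, u = window a n i ∧ (∀ x < n, a (i + x) ≤ N) ∧ ∃ x < n, a (i + x) = N := by
  rw [factorSet1, Set.mem_sdiff, mem_factorSet, mem_factorSet]
  constructor
  · rintro ⟨⟨i, rfl, h⟩, h'⟩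
    refine ⟨i, rfl, h, ?_⟩
    by_contra! hc
    refine h' ⟨i, rfl, fun x hx => ?_⟩
    have := h x hx
    have := hc x hx
    omega
  · rintro ⟨i, rfl, h, x, hx, hxN⟩
    refine ⟨⟨i, rfl, h⟩, ?_⟩
    rintro ⟨i', hi', h'⟩
    have := window_inj.1 hi' x hx
    have := h' x hx
    omega

lemma finite_factorSet (a : ℕ → ℕ) (n N : ℕ) : (factorSet a n N).Finite := by
  refine ((List.finite_length_eq (Fin (N + 1)) n).image (List.map Fin.val)).subset ?_
  intro u hu
  obtain ⟨i, rfl, h⟩ := mem_factorSet.1 hu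
  refine ⟨(List.range n).map fun x => Fin.ofNat (N + 1) (a (i + x)), by simp, ?_⟩
  rw [List.map_map, window]
  refine List.map_congr_left fun x hx => ?_
  have := h x (List.mem_range.1 hx)
  simp only [Function.comp_apply, Fin.ofNat]
  exact Nat.mod_eq_of_lt (by omega)

lemma Pc1_eq (a : ℕ → ℕ) (n N : ℕ) : Pc1 a n N = ((factorSet1 a n N).ncard : ℤ) := by
  have hsub : factorSet a n (N - 1) ⊆ factorSet a n N := by
    rintro u ⟨h, h'⟩
    exact ⟨h, fun x hx => (h' x hx).trans (Nat.sub_le _ _)⟩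
  have h := Set.ncard_sdiff_add_ncard_of_subset hsub (finite_factorSet a n N)
  rw [Pc1, Pc, Pc, Nat.card_coe_set_eq, Nat.card_coe_set_eq, factorSet1]
  omega

lemma factorSet1_eq {k Q : ℕ} {s : ℕ → ℕ} (hs : DigitRec k Q s) (h1 : s 1 = 0) {n L N : ℕ}
    (hn2 : 2 ≤ n) (hn : n ≤ k ^ L) (hL : L + 2 ≤ N) :
    factorSet1 s n N = (List.map (· + 1)) '' factorSet1 s n (N - 1) ∪
      (fun j => window s n (k ^ (N + Q) - j)) '' Set.Ico 1 n := by
  ext u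
  rw [Set.mem_union, mem_factorSet1 (by omega)]
  constructor
  · rintro ⟨i, rfl, hle, hmax⟩
    rcases hs.classify h1 hn2 hn hL i hle hmax with ⟨i', hi'⟩ | ⟨j, hj1, hjn, hj⟩
    · left
      refine ⟨window s n i', (mem_factorSet1 (by omega)).2 ⟨i', rfl, fun x hx => ?_, ?_⟩, ?_⟩
      · have := hle x hx
        have := hi' x hx
        omega
      · obtain ⟨x, hx, hxN⟩ := hmax
        have := hi' x hx
        exact ⟨x, hx, by omega⟩
      · rw [map_succ_window, window_inj]
        exact fun x hx => (hi' x hx).symm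
    · right
      exact ⟨j, ⟨hj1, hjn⟩, window_inj.2 fun x hx => (hj x hx).symm⟩
  · rintro (⟨v, hv, rfl⟩ | ⟨j, ⟨hj1, hjn⟩, rfl⟩)
    · obtain ⟨i, rfl, hle, x, hx, hxN⟩ := (mem_factorSet1 (by omega)).1 hv
      obtain ⟨i', hi'⟩ := hs.shift_up n i
      refine ⟨i', ?_, fun z hz => ?_, x, hx, ?_⟩
      · rw [map_succ_window, window_inj]
        exact fun z hz => (hi' z hz).symm
      · have := hle z hz
        have := hi' z hz
        omega
      · have := hi' x hx
        omega
    · refine ⟨_, rfl, fun x hx => ?_, j - 1, by omega, ?_⟩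
      · by_cases hxj : x < j
        · rw [hs.window_left hn (by omega) hjn hxj]
          have := hs.gain_le L (j - x) (by omega) (by omega)
          omega
        · rw [hs.window_right h1 hn (by omega) hjn (by omega) hx]
          have := hs.le_of_lt_pow (show x - j < k ^ L by omega)
          omega
      · rw [hs.window_left hn (by omega) hjn (by omega), show j - (j - 1) = 1 by omega,
          hs.gain_one]
        omega

lemma ncard_factorSet1 {k Q : ℕ} {s : ℕ → ℕ} (hs : DigitRec k Q s) (h1 : s 1 = 0) {n L N : ℕ}
    (hn2 : 2 ≤ n) (hn : n ≤ k ^ L) (hL : L + 2 ≤ N) :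
    (factorSet1 s n N).ncard = (factorSet1 s n (N - 1)).ncard + (n - 1) := by
  have hzero : ∀ j < n, s (k ^ (N + Q) - j + j) = 0 := by
    intro j hj
    rw [hs.window_right h1 hn (by omega) hj le_rfl hj, Nat.sub_self, hs.zero]
  have hpos : ∀ j < n, ∀ x < j, s (k ^ (N + Q) - j + x) ≠ 0 := by
    intro j hj x hx
    rw [hs.window_left hn (by omega) hj hx]
    omega
  have hfin : (factorSet1 s n (N - 1)).Finite :=
    (finite_factorSet s n (N - 1)).subset Set.sdiff_subset
  rw [factorSet1_eq hs h1 hn2 hn hL, Set.ncard_union_eq ?_ (hfin.image _)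
    ((Set.finite_Ico 1 n).image _)]
  · congr 1
    · exact Set.ncard_image_of_injective _ (List.map_injective_iff.2 (add_left_injective 1))
    · rw [Set.InjOn.ncard_image]
      · simp [Set.ncard_eq_toFinset_card']
      · intro j hj j' hj' he
        have he' := window_inj.1 he
        -- The index of the first zero recovers `j`.
        rcases lt_trichotomy j j' with h | h | h
        · exact absurd ((he' j hj.2).symm.trans (hzero j hj.2)) (hpos j' hj'.2 j h)
        · exact h
        · exact absurd ((he' j' hj'.2).trans (hzero j' hj'.2)) (hpos j hj.2 j' h)
  · rw [Set.disjoint_left]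
    rintro _ ⟨v, hv, rfl⟩ ⟨j, hj, he⟩
    obtain ⟨i, rfl, -⟩ := (mem_factorSet1 (by omega)).1 hv
    rw [map_succ_window] at he
    have := window_inj.1 he j hj.2
    have := hzero j hj.2
    omega

theorem stmt15 (k q : ℕ) (hk : 2 ≤ k) (hq : 1 ≤ q)
    (hne : ¬ (k = 2 ∧ List.replicate q (k - 1) = [1])) (n : ℕ) (hn : 2 ≤ n)
    (N : ℕ) (hN : Nat.clog k n + 2 ≤ N) :
    Pc2 (dseq k (List.replicate q (k - 1))) n N = (n : ℤ) - 1 := by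
  obtain ⟨Q, rfl⟩ : ∃ Q, q = Q + 1 := ⟨q - 1, by omega⟩
  have hs : DigitRec k Q (dseq k (List.replicate (Q + 1) (k - 1))) :=
    ⟨hk, dseq_zero hk, dseq_rec hk⟩
  have h1 : dseq k (List.replicate (Q + 1) (k - 1)) 1 = 0 := by
    rw [dseq_rec hk, Nat.div_eq_of_lt (by omega), dseq_zero hk, if_neg]
    -- `k ^ (Q + 1) ∣ 2` would force `k = 2` and `Q = 0`.
    intro h
    have hk2 : k = 2 := le_antisymm
      (Nat.le_of_dvd (by omega) ((dvd_pow_self k (by omega)).trans h)) hk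
    subst hk2
    rcases Q with _ | Q
    · exact hne (by simp)
    · have h4 : 2 ^ 2 ∣ 2 := (pow_dvd_pow 2 (show 2 ≤ Q + 1 + 1 by omega)).trans h
      omega
  have := ncard_factorSet1 hs h1 hn (Nat.le_pow_clog (by omega) n) hN
  rw [Pc2, Pc1_eq, Pc1_eq, this]
  push_cast [show 1 ≤ n by omega]
  ring
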